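/- arXiv:2410.21526 — 2 statements merged into one kernel-verified Lean document; each statement's English description precedes it below -/
import Mathlib

section
/- Let N ≥ 1 and let p', p̂ : Fin N → ℝ be such that 0 ≤ p'_i ≤ 1 and 0 < p̂_i ≤ 1 for every i. Then the DIMP-Loss admits the lower bound −(1/N) Σ_{i} (p'_i / p̂_i) · log p̂_i ≥ −(2/N) Σ_{i} p'_i · log p̂_i + (1/N) Σ_{i} p̂_i · log p̂_i; that is, the weighted cross-entropy with weights p'_i/p̂_i is bounded below by twice the empirical distilled cross-entropy plus the maximum-entropy regularizer term. -/
open Finset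

/-- Lower bound for the DIMP-Loss: the weighted cross-entropy with weights `p'_i/p̂_i`
is bounded below by twice the empirical distilled cross-entropy plus the
maximum-entropy regularizer term. -/
theorem dimp_loss_lower_bound
    (N : ℕ) (hN : 1 ≤ N) (p' phat : Fin N → ℝ)
    (hp'0 : ∀ i, 0 ≤ p' i) (hp'1 : ∀ i, p' i ≤ 1)
    (hphat0 : ∀ i, 0 < phat i) (hphat1 : ∀ i, phat i ≤ 1) :
    -(1 / (N : ℝ)) * ∑ i : Fin N, (p' i / phat i) * Real.log (phat i)
      ≥ -(2 / (N : ℝ)) * ∑ i : Fin N, p' i * Real.log (phat i)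
          + (1 / (N : ℝ)) * ∑ i : Fin N, phat i * Real.log (phat i) := by
  have key : ∑ i : Fin N, ((p' i / phat i) * Real.log (phat i)
      - 2 * (p' i * Real.log (phat i)) + phat i * Real.log (phat i)) ≤ 0 := by
    apply Finset.sum_nonpos
    intro i _
    have h0 := hphat0 i
    have hl : Real.log (phat i) ≤ 0 := Real.log_nonpos h0.le (hphat1 i)
    have hc : 0 ≤ p' i / phat i - 2 * p' i + phat i := by
      have e : p' i / phat i - 2 * p' i + phat i
          = (p' i - 2 * p' i * phat i + phat i ^ 2) / phat i := by
        field_simp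
      rw [e]
      apply div_nonneg _ h0.le
      nlinarith [sq_nonneg (p' i - phat i), mul_nonneg (hp'0 i) (sub_nonneg.2 (hp'1 i))]
    have := mul_nonpos_of_nonneg_of_nonpos hc hl
    linarith
  rw [Finset.sum_add_distrib, Finset.sum_sub_distrib, ← Finset.mul_sum] at key
  have hn : (0 : ℝ) ≤ 1 / (N : ℝ) := by positivity
  have h := mul_nonpos_of_nonneg_of_nonpos hn key
  have e2 : (2 / (N : ℝ)) = 2 * (1 / (N : ℝ)) := by ring
  rw [e2]
  linarith
end

section
/- For all real numbers a and b with 0 < a ≤ 1 and 0 ≤ b ≤ 1, one has −(b/a) · log a ≥ −2b · log a + a · log a. -/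
/-- Pointwise (single-summand) inequality from which the DIMP-Loss lower bound follows
by summation: for `0 < a ≤ 1` and `0 ≤ b ≤ 1`,
`−(b/a)·log a ≥ −2b·log a + a·log a`. -/
theorem dimp_pointwise_lower_bound (a b : ℝ) (ha0 : 0 < a) (ha1 : a ≤ 1)
    (hb0 : 0 ≤ b) (hb1 : b ≤ 1) :
    -(b / a) * Real.log a ≥ -(2 * b) * Real.log a + a * Real.log a := by
  have hl : Real.log a ≤ 0 := Real.log_nonpos ha0.le ha1
  have h : 0 ≤ b / a - 2 * b + a := by
    have e : b / a - 2 * b + a = (b - 2 * a * b + a ^ 2) / a := by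
      field_simp
    rw [e]
    apply div_nonneg _ ha0.le
    nlinarith [sq_nonneg (a - b), mul_nonneg hb0 (sub_nonneg.2 hb1)]
  have h2 := mul_nonneg h (neg_nonneg.2 hl)
  linarith
end
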